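/- Fix an integer d ≥ 1 and a real number m with 0 < m < 2, and set λ := inf_{k ∈ ℝ^d} f_m(k)². Then λ > 0, and for every real C with 0 < C < λ there exists ε > 0 with the following property: for every finite-dimensional complex Hilbert space H, every Clifford system (c_1, …, c_d, γ) on H, and all unitaries U_1, …, U_d on H, each commuting with every c_j and with γ, satisfying ‖U_j U_l − U_l U_j‖ < ε for all j, l, the operator inequality D(1, m)² ≥ C·1 holds; in particular the massive hermitian Wilson–Dirac operator D(1, m) is invertible. -/

import Mathlib

noncomputable section

/-- A Clifford system `(c_1, …, c_d, γ)` on a complex Hilbert space `H`: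
`c_j* = -c_j`, `c_j c_l + c_l c_j = -2 δ_{jl} 1`, `γ* = γ`, `γ² = 1`, `γ c_j = -c_j γ`. -/
structure CliffordSystem (H : Type*) [NormedAddCommGroup H] [InnerProductSpace ℂ H]
    [CompleteSpace H] (d : ℕ) where
  c : Fin d → H →L[ℂ] H
  γ : H →L[ℂ] H
  c_skew : ∀ j, star (c j) = -c j
  c_rel : ∀ j l, c j * c l + c l * c j =
    if j = l then (-2 : ℂ) • (1 : H →L[ℂ] H) else 0
  γ_sa : star γ = γ
  γ_sq : γ * γ = 1
  γ_anticomm : ∀ j, γ * c j = -(c j * γ)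

variable {H : Type*} [NormedAddCommGroup H] [InnerProductSpace ℂ H] [CompleteSpace H]

/-- `x = (U - U*)/(2i)`, the "imaginary part" of a unitary `U`. -/
def xPart (U : H →L[ℂ] H) : H →L[ℂ] H := ((2 * Complex.I)⁻¹ : ℂ) • (U - star U)

/-- `y = (U + U*)/2`, the "real part" of a unitary `U`. -/
def yPart (U : H →L[ℂ] H) : H →L[ℂ] H := ((2 : ℂ)⁻¹ : ℂ) • (U + star U)

/-- The massive hermitian Wilson--Dirac operator
`D(κ, m) = κ·Σ_j i x_j c_j + γ·(κ·Σ_j (y_j − 1) + m)`. -/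
def wilsonDirac {d : ℕ} (cs : CliffordSystem H d) (U : Fin d → H →L[ℂ] H)
    (κ m : ℝ) : H →L[ℂ] H :=
  (κ : ℂ) • (∑ j, Complex.I • (xPart (U j) * cs.c j)) +
    cs.γ * ((κ : ℂ) • (∑ j, (yPart (U j) - 1)) + (m : ℂ) • (1 : H →L[ℂ] H))

/-- `f_m(k)² = Σ_j sin²(2π k_j) + (Σ_j (cos(2π k_j) − 1) + m)²`. -/
def fmSq (d : ℕ) (m : ℝ) (k : Fin d → ℝ) : ℝ :=
  ∑ j, Real.sin (2 * Real.pi * k j) ^ 2 +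
    (∑ j, (Real.cos (2 * Real.pi * k j) - 1) + m) ^ 2

/-- `E_{>0}(A)`: the sum of the eigenspaces of `A` with positive (real) eigenvalue. -/
def posSpace (A : H →L[ℂ] H) : Submodule ℂ H :=
  ⨆ (μ : ℝ) (_ : 0 < μ), Module.End.eigenspace (A.toLinearMap) (μ : ℂ)

/-- `E_{<0}(A)`: the sum of the eigenspaces of `A` with negative (real) eigenvalue. -/
def negSpace (A : H →L[ℂ] H) : Submodule ℂ H :=
  ⨆ (μ : ℝ) (_ : μ < 0), Module.End.eigenspace (A.toLinearMap) (μ : ℂ)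

/-- `𝐈(A) = (dim E_{>0}(A) − dim E_{<0}(A))/2`, a priori a half-integer. -/
def Ind (A : H →L[ℂ] H) : ℚ :=
  ((Module.finrank ℂ (posSpace A) : ℚ) - (Module.finrank ℂ (negSpace A) : ℚ)) / 2

end

lemma continuous_fmSq (d : ℕ) (m : ℝ) : Continuous (fmSq d m) := by
  unfold fmSq
  fun_prop

lemma fmSq_fract (d : ℕ) (m : ℝ) (k : Fin d → ℝ) :
    fmSq d m (fun j => Int.fract (k j)) = fmSq d m k := by
  have h : ∀ j, 2 * Real.pi * Int.fract (k j) = 2 * Real.pi * k j - ⌊k j⌋ * (2 * Real.pi) := by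
    intro j
    rw [Int.fract]
    ring
  simp only [fmSq, h, Real.sin_sub_int_mul_two_pi, Real.cos_sub_int_mul_two_pi]

lemma fmSq_nonneg (d : ℕ) (m : ℝ) (k : Fin d → ℝ) : 0 ≤ fmSq d m k := by
  unfold fmSq
  positivity

lemma sInf_fmSq_le (d : ℕ) (m : ℝ) (k : Fin d → ℝ) :
    sInf (Set.range (fmSq d m)) ≤ fmSq d m k :=
  csInf_le ⟨0, by rintro _ ⟨l, rfl⟩; exact fmSq_nonneg d m l⟩ ⟨k, rfl⟩

/-- If all sines vanish, the mass term is `m - 2n` for a natural number `n`. -/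
lemma fmSq_pos (d : ℕ) {m : ℝ} (hm0 : 0 < m) (hm2 : m < 2) (k : Fin d → ℝ) :
    0 < fmSq d m k := by
  refine lt_of_le_of_ne (fmSq_nonneg d m k) fun h0 => ?_
  have hsum : 0 ≤ ∑ j, Real.sin (2 * Real.pi * k j) ^ 2 :=
    Finset.sum_nonneg fun j _ => sq_nonneg _
  have hsq := sq_nonneg (∑ j, (Real.cos (2 * Real.pi * k j) - 1) + m)
  unfold fmSq at h0
  have hs : ∑ j, Real.sin (2 * Real.pi * k j) ^ 2 = 0 := by linarith
  have hmass : ∑ j, (Real.cos (2 * Real.pi * k j) - 1) + m = 0 := by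
    refine pow_eq_zero_iff two_ne_zero |>.1 ?_
    linarith
  rw [Finset.sum_eq_zero_iff_of_nonneg fun j _ => sq_nonneg _] at hs
  have hcos : ∀ j, Real.cos (2 * Real.pi * k j) - 1 = 0 ∨
      Real.cos (2 * Real.pi * k j) - 1 = -2 := by
    intro j
    have h1 := Real.sin_sq_add_cos_sq (2 * Real.pi * k j)
    rw [hs j (Finset.mem_univ j), zero_add, sq_eq_one_iff] at h1
    rcases h1 with h1 | h1 <;> rw [h1] <;> norm_num
  by_cases hall : ∀ j, Real.cos (2 * Real.pi * k j) - 1 = 0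
  · simp only [hall, Finset.sum_const_zero, zero_add] at hmass
    exact hm0.ne' hmass
  · push Not at hall
    obtain ⟨j, hj⟩ := hall
    have hj2 := (hcos j).resolve_left hj
    have hle : ∑ i, (1 - Real.cos (2 * Real.pi * k i)) ≥ 1 - Real.cos (2 * Real.pi * k j) :=
      Finset.single_le_sum (f := fun i => 1 - Real.cos (2 * Real.pi * k i))
        (fun i _ => sub_nonneg.2 (Real.cos_le_one _)) (Finset.mem_univ j)
    have hneg : ∑ i, (1 - Real.cos (2 * Real.pi * k i)) =
        -∑ i, (Real.cos (2 * Real.pi * k i) - 1) := by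
      rw [← Finset.sum_neg_distrib]
      exact Finset.sum_congr rfl fun i _ => by ring
    linarith

lemma sInf_fmSq_pos (d : ℕ) {m : ℝ} (hm0 : 0 < m) (hm2 : m < 2) :
    0 < sInf (Set.range (fmSq d m)) := by
  have hrange : Set.range (fmSq d m) = fmSq d m '' Set.Icc 0 1 := by
    refine Set.Subset.antisymm ?_ (Set.image_subset_range _ _)
    rintro _ ⟨k, rfl⟩
    exact ⟨fun j => Int.fract (k j), ⟨fun j => Int.fract_nonneg _,
      fun j => (Int.fract_lt_one _).le⟩, fmSq_fract d m k⟩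
  have hmem : sInf (Set.range (fmSq d m)) ∈ Set.range (fmSq d m) := by
    rw [hrange]
    exact (isCompact_Icc.image (continuous_fmSq d m)).sInf_mem
      ((Set.nonempty_Icc.2 zero_le_one).image _)
  obtain ⟨k, hk⟩ := hmem
  rw [← hk]
  exact fmSq_pos d hm0 hm2 k

section Localization

variable {H : Type*} [NormedAddCommGroup H] [InnerProductSpace ℂ H]
variable {M : ℕ} [NeZero M]

lemma norm_stdAddChar (a : ZMod M) : ‖(ZMod.stdAddChar a : ℂ)‖ = 1 := by
  rw [ZMod.stdAddChar_apply]
  exact Circle.norm_coe _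

lemma stdAddChar_mul_conj (a : ZMod M) :
    (ZMod.stdAddChar a : ℂ) * (starRingEnd ℂ) (ZMod.stdAddChar a) = 1 := by
  rw [Complex.mul_conj, Complex.normSq_eq_norm_sq, norm_stdAddChar]
  norm_num

/-- Parseval's identity for the discrete Fourier transform of a vector-valued function. -/
lemma sum_norm_sq_dft (u : ℕ → H) :
    ∑ a : ZMod M, ‖∑ n ∈ Finset.range M, (starRingEnd ℂ) (ZMod.stdAddChar a) ^ n • u n‖ ^ 2 =
      M * ∑ n ∈ Finset.range M, ‖u n‖ ^ 2 := by
  have horth : ∀ n ∈ Finset.range M, ∀ l ∈ Finset.range M,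
      ∑ a : ZMod M, (ZMod.stdAddChar a : ℂ) ^ n * (starRingEnd ℂ) (ZMod.stdAddChar a) ^ l =
        if n = l then (M : ℂ) else 0 := by
    intro n hn l hl
    have hn' := Finset.mem_range.1 hn
    have hl' := Finset.mem_range.1 hl
    have key := AddChar.sum_mulShift ((n : ZMod M) - l) (ZMod.isPrimitive_stdAddChar M)
    have hiff : (n : ZMod M) - l = 0 ↔ n = l := by
      rw [sub_eq_zero, ZMod.natCast_eq_natCast_iff]
      exact ⟨fun h => Nat.ModEq.eq_of_lt_of_lt h hn' hl', fun h => h ▸ rfl⟩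
    simp only [hiff, ZMod.card] at key
    rw [← Nat.cast_zero, ← Nat.cast_ite, ← key]
    refine Finset.sum_congr rfl fun a _ => ?_
    rw [mul_sub, sub_eq_add_neg, AddChar.map_add_eq_mul, AddChar.map_neg_eq_conj, mul_comm a,
      mul_comm a, ← nsmul_eq_mul, ← nsmul_eq_mul, AddChar.map_nsmul_eq_pow,
      AddChar.map_nsmul_eq_pow, map_pow]
  have hcomplex : ((∑ a : ZMod M,
      ‖∑ n ∈ Finset.range M, (starRingEnd ℂ) (ZMod.stdAddChar a) ^ n • u n‖ ^ 2 : ℝ) : ℂ) =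
      ((M * ∑ n ∈ Finset.range M, ‖u n‖ ^ 2 : ℝ) : ℂ) := by
    push_cast
    have hin : ∀ w : H, ((‖w‖ : ℝ) : ℂ) ^ 2 = inner ℂ w w :=
      fun w => (inner_self_eq_norm_sq_to_K w).symm
    simp only [hin, sum_inner, inner_sum, inner_smul_left, inner_smul_right, map_pow,
      Complex.conj_conj]
    rw [Finset.sum_comm, Finset.mul_sum]
    refine Finset.sum_congr rfl fun n hn => ?_
    simp only [Finset.mul_sum]
    rw [Finset.sum_comm, Finset.sum_eq_single_of_mem n hn]
    · have h := horth n hn n hn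
      rw [if_pos rfl] at h
      rw [← h, Finset.sum_mul]
      exact Finset.sum_congr rfl fun a _ => by ring
    · intro l hl hne
      have h := horth l hl n hn
      rw [if_neg hne] at h
      rw [← zero_mul (inner ℂ (u l) (u n)), ← h, Finset.sum_mul]
      exact Finset.sum_congr rfl fun a _ => by ring
  exact_mod_cast hcomplex

/-- The averaged spectral localizer of `U` at the root of unity indexed by `a`. -/
noncomputable def fourierLocalizer (U : H →L[ℂ] H) (a : ZMod M) : H →L[ℂ] H :=
  (M : ℂ)⁻¹ • ∑ n ∈ Finset.range M, ((starRingEnd ℂ) (ZMod.stdAddChar a) • U) ^ n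

lemma fourierLocalizer_mul_sub (U : H →L[ℂ] H) (a : ZMod M) :
    fourierLocalizer U a * (U - (ZMod.stdAddChar a : ℂ) • 1) =
      ((M : ℂ)⁻¹ * ZMod.stdAddChar a) • (U ^ M - 1) := by
  have h1 : U - (ZMod.stdAddChar a : ℂ) • 1 = (ZMod.stdAddChar a : ℂ) •
      ((starRingEnd ℂ) (ZMod.stdAddChar a) • U - 1) := by
    rw [smul_sub, smul_smul, stdAddChar_mul_conj, one_smul]
  have h2 : (starRingEnd ℂ) (ZMod.stdAddChar a) ^ M = 1 := by
    rw [← map_pow, ← AddChar.map_nsmul_eq_pow]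
    simp
  rw [h1, fourierLocalizer, smul_mul_smul_comm, geom_sum_mul, smul_pow, h2, one_smul]

lemma commute_fourierLocalizer {U X : H →L[ℂ] H} (h : Commute U X) (a : ZMod M) :
    Commute (fourierLocalizer U a) X :=
  (Commute.sum_left _ _ _ fun n _ => (h.smul_left _).pow_left n).smul_left _

lemma norm_pow_apply_of_isometry {U : H →L[ℂ] H} (hU : ∀ v, ‖U v‖ = ‖v‖) (n : ℕ) (v : H) :
    ‖(U ^ n) v‖ = ‖v‖ := by
  induction n with
  | zero => simp
  | succ n ih => rw [pow_succ', mul_apply_eq_comp, hU, ih]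

lemma sum_norm_sq_fourierLocalizer {U : H →L[ℂ] H} (hU : ∀ v, ‖U v‖ = ‖v‖) (v : H) :
    ∑ a : ZMod M, ‖fourierLocalizer U a v‖ ^ 2 = ‖v‖ ^ 2 := by
  have hM : (M : ℝ) ≠ 0 := Nat.cast_ne_zero.2 (NeZero.ne M)
  have h := sum_norm_sq_dft (M := M) fun n => (U ^ n) v
  simp only [norm_pow_apply_of_isometry hU, Finset.sum_const, Finset.card_range,
    nsmul_eq_mul] at h
  simp only [fourierLocalizer, smul_apply, sum_apply,
    smul_pow, norm_smul, mul_pow, ← Finset.mul_sum, h, norm_inv, Complex.norm_natCast]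
  field_simp

lemma norm_fourierLocalizer_apply_le {U : H →L[ℂ] H} (hU : ∀ v, ‖U v‖ = ‖v‖) (a : ZMod M)
    (v : H) : ‖fourierLocalizer U a v‖ ≤ ‖v‖ := by
  refine pow_le_pow_iff_left₀ (norm_nonneg _) (norm_nonneg _) two_ne_zero |>.1 ?_
  rw [← sum_norm_sq_fourierLocalizer (M := M) hU v]
  exact Finset.single_le_sum (f := fun a => ‖fourierLocalizer U a v‖ ^ 2)
    (fun _ _ => sq_nonneg _) (Finset.mem_univ a)

lemma sum_norm_sq_fourierLocalizer_mul_sub {U : H →L[ℂ] H} (hU : ∀ v, ‖U v‖ = ‖v‖) (v : H) :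
    ∑ a : ZMod M, ‖(fourierLocalizer U a * (U - (ZMod.stdAddChar a : ℂ) • 1)) v‖ ^ 2 ≤
      4 / M * ‖v‖ ^ 2 := by
  have hM : (0 : ℝ) < M := Nat.cast_pos.2 (NeZero.pos M)
  have h : ‖(U ^ M) v - v‖ ≤ 2 * ‖v‖ := by
    refine (norm_sub_le _ _).trans ?_
    rw [norm_pow_apply_of_isometry hU, two_mul]
  have hsq : ‖(U ^ M) v - v‖ ^ 2 ≤ (2 * ‖v‖) ^ 2 := pow_le_pow_left₀ (norm_nonneg _) h 2
  simp only [fourierLocalizer_mul_sub, smul_apply,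
    sub_apply, one_apply_eq_self, norm_smul, norm_mul,
    norm_stdAddChar, mul_one, mul_pow, norm_inv, Complex.norm_natCast, Finset.sum_const,
    Finset.card_univ, ZMod.card, nsmul_eq_mul]
  calc (M : ℝ) * ((M : ℝ)⁻¹ ^ 2 * ‖(U ^ M) v - v‖ ^ 2)
      = (M : ℝ)⁻¹ * ‖(U ^ M) v - v‖ ^ 2 := by field_simp
    _ ≤ (M : ℝ)⁻¹ * (2 * ‖v‖) ^ 2 := by gcongr
    _ = 4 / M * ‖v‖ ^ 2 := by ring

lemma norm_pow_commutator_le {U X : H →L[ℂ] H} (hU : ∀ v, ‖U v‖ = ‖v‖) (n : ℕ) :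
    ‖U ^ n * X - X * U ^ n‖ ≤ n * ‖U * X - X * U‖ := by
  induction n with
  | zero => simp
  | succ n ih =>
    have h : U ^ (n + 1) * X - X * U ^ (n + 1) =
        U * (U ^ n * X - X * U ^ n) + (U * X - X * U) * U ^ n := by
      rw [pow_succ']
      noncomm_ring
    rw [h]
    refine (norm_add_le _ _).trans ?_
    have hU1 : ‖U‖ ≤ 1 := ContinuousLinearMap.opNorm_le_bound _ zero_le_one fun v => by
      rw [one_mul, hU]
    have h1 : ‖U * (U ^ n * X - X * U ^ n)‖ ≤ 1 * (n * ‖U * X - X * U‖) :=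
      (norm_mul_le _ _).trans (mul_le_mul hU1 ih (norm_nonneg _) zero_le_one)
    have hpow : ‖U ^ n‖ ≤ 1 := ContinuousLinearMap.opNorm_le_bound _ zero_le_one fun v => by
      rw [one_mul, norm_pow_apply_of_isometry hU]
    have h2 : ‖(U * X - X * U) * U ^ n‖ ≤ ‖U * X - X * U‖ * 1 :=
      (norm_mul_le _ _).trans (mul_le_mul_of_nonneg_left hpow (norm_nonneg _))
    push_cast
    linarith

lemma norm_fourierLocalizer_commutator_le {U X : H →L[ℂ] H} (hU : ∀ v, ‖U v‖ = ‖v‖) (a : ZMod M) :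
    ‖fourierLocalizer U a * X - X * fourierLocalizer U a‖ ≤ M * ‖U * X - X * U‖ := by
  have hM : (0 : ℝ) < M := Nat.cast_pos.2 (NeZero.pos M)
  have h : fourierLocalizer U a * X - X * fourierLocalizer U a =
      (M : ℂ)⁻¹ • ∑ n ∈ Finset.range M, (starRingEnd ℂ) (ZMod.stdAddChar a) ^ n •
        (U ^ n * X - X * U ^ n) := by
    simp only [fourierLocalizer, smul_mul_assoc, mul_smul_comm, Finset.sum_mul, Finset.mul_sum,
      ← smul_sub, ← Finset.sum_sub_distrib, smul_pow]
  rw [h, norm_smul, norm_inv, Complex.norm_natCast]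
  have hsum : ‖∑ n ∈ Finset.range M, (starRingEnd ℂ) (ZMod.stdAddChar a) ^ n •
        (U ^ n * X - X * U ^ n)‖ ≤ ∑ n ∈ Finset.range M, M * ‖U * X - X * U‖ := by
    refine norm_sum_le_of_le _ fun n hn => ?_
    rw [norm_smul, norm_pow, RCLike.norm_conj, norm_stdAddChar, one_pow, one_mul]
    refine (norm_pow_commutator_le hU n).trans ?_
    gcongr
    exact (Finset.mem_range.1 hn).le
  calc (M : ℝ)⁻¹ * _ ≤ (M : ℝ)⁻¹ * ∑ n ∈ Finset.range M, M * ‖U * X - X * U‖ := by gcongr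
    _ = M * ‖U * X - X * U‖ := by
      rw [Finset.sum_const, Finset.card_range, nsmul_eq_mul]
      field_simp

/-- The ordered product of the localizers of the `U j` at the roots of unity indexed by `a j`. -/
noncomputable def jointLocalizer {d : ℕ} (U : Fin d → H →L[ℂ] H) (a : Fin d → ZMod M) :
    H →L[ℂ] H :=
  (List.ofFn fun j => fourierLocalizer (U j) (a j)).prod

lemma jointLocalizer_cons {d : ℕ} (U : Fin (d + 1) → H →L[ℂ] H) (b : ZMod M)
    (a : Fin d → ZMod M) :
    jointLocalizer U (Fin.cons b a) =
      fourierLocalizer (U 0) b * jointLocalizer (fun j => U j.succ) a := by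
  simp [jointLocalizer, List.ofFn_succ]

lemma sum_fin_succ_zmod {d : ℕ} (F : (Fin (d + 1) → ZMod M) → ℝ) :
    ∑ a, F a = ∑ a : Fin d → ZMod M, ∑ b : ZMod M, F (Fin.cons b a) := by
  rw [← (Fin.consEquiv fun _ => ZMod M).sum_comp, Fintype.sum_prod_type_right]
  rfl

lemma commute_jointLocalizer {d : ℕ} {U : Fin d → H →L[ℂ] H} {X : H →L[ℂ] H}
    (h : ∀ j, Commute (U j) X) (a : Fin d → ZMod M) : Commute (jointLocalizer U a) X := by
  refine Commute.list_prod_left _ _ fun Y hY => ?_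
  obtain ⟨j, rfl⟩ := List.mem_ofFn.1 hY
  exact commute_fourierLocalizer (h j) (a j)

lemma sum_norm_sq_jointLocalizer {d : ℕ} {U : Fin d → H →L[ℂ] H}
    (hU : ∀ j v, ‖U j v‖ = ‖v‖) (v : H) :
    ∑ a : Fin d → ZMod M, ‖jointLocalizer U a v‖ ^ 2 = ‖v‖ ^ 2 := by
  induction d with
  | zero => simp [jointLocalizer]
  | succ d ih =>
    simp only [sum_fin_succ_zmod, jointLocalizer_cons, mul_apply_eq_comp,
      sum_norm_sq_fourierLocalizer (hU 0)]
    exact ih fun j => hU j.succ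

lemma norm_jointLocalizer_le {d : ℕ} {U : Fin d → H →L[ℂ] H}
    (hU : ∀ j v, ‖U j v‖ = ‖v‖) (a : Fin d → ZMod M) : ‖jointLocalizer U a‖ ≤ 1 := by
  refine ContinuousLinearMap.opNorm_le_bound _ zero_le_one fun v => ?_
  rw [one_mul]
  refine pow_le_pow_iff_left₀ (norm_nonneg _) (norm_nonneg _) two_ne_zero |>.1 ?_
  rw [← sum_norm_sq_jointLocalizer (M := M) hU v]
  exact Finset.single_le_sum (f := fun a => ‖jointLocalizer U a v‖ ^ 2)
    (fun _ _ => sq_nonneg _) (Finset.mem_univ a)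

lemma norm_jointLocalizer_commutator_le {d : ℕ} {U : Fin d → H →L[ℂ] H} {X : H →L[ℂ] H}
    (hU : ∀ j v, ‖U j v‖ = ‖v‖) {ε : ℝ} (hX : ∀ j, ‖U j * X - X * U j‖ ≤ ε)
    (a : Fin d → ZMod M) :
    ‖jointLocalizer U a * X - X * jointLocalizer U a‖ ≤ d * (M * ε) := by
  induction d with
  | zero => simp [jointLocalizer]
  | succ d ih =>
    obtain ⟨b, a, rfl⟩ : ∃ b a', a = Fin.cons b a' := ⟨a 0, Fin.tail a, (Fin.cons_self_tail a).symm⟩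
    rw [jointLocalizer_cons]
    set P := fourierLocalizer (U 0) b
    set W := jointLocalizer (fun j => U j.succ) a
    have hsplit : P * W * X - X * (P * W) = P * (W * X - X * W) + (P * X - X * P) * W := by
      noncomm_ring
    have hP : ‖P‖ ≤ 1 := ContinuousLinearMap.opNorm_le_bound _ zero_le_one fun v => by
      rw [one_mul]
      exact norm_fourierLocalizer_apply_le (hU 0) b v
    have hW : ‖W‖ ≤ 1 := norm_jointLocalizer_le (fun j => hU j.succ) a
    have hPX : ‖P * X - X * P‖ ≤ M * ε :=
      (norm_fourierLocalizer_commutator_le (hU 0) b).trans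
        (mul_le_mul_of_nonneg_left (hX 0) (Nat.cast_nonneg M))
    have hWX : ‖W * X - X * W‖ ≤ d * (M * ε) := ih (fun j => hU j.succ) (fun j => hX j.succ) a
    have h1 : ‖P * (W * X - X * W)‖ ≤ 1 * (d * (M * ε)) :=
      (norm_mul_le _ _).trans (mul_le_mul hP hWX (norm_nonneg _) zero_le_one)
    have h2 : ‖(P * X - X * P) * W‖ ≤ M * ε * 1 :=
      (norm_mul_le _ _).trans (mul_le_mul hPX hW (norm_nonneg _) ((norm_nonneg _).trans hPX))
    rw [hsplit]
    refine (norm_add_le _ _).trans ?_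
    push_cast
    linarith

lemma norm_add_sq_le_two_mul {E : Type*} [SeminormedAddCommGroup E] (v w : E) :
    ‖v + w‖ ^ 2 ≤ 2 * ‖v‖ ^ 2 + 2 * ‖w‖ ^ 2 := by
  have h := pow_le_pow_left₀ (norm_nonneg _) (norm_add_le v w) 2
  nlinarith [sq_nonneg (‖v‖ - ‖w‖)]

/-- On the range of the joint localizer at `a`, each `U j` is close to the scalar indexed by
`a j`, in square mean over all `a`. -/
lemma sum_norm_sq_jointLocalizer_mul_sub {d : ℕ} {U : Fin d → H →L[ℂ] H}
    (hU : ∀ j v, ‖U j v‖ = ‖v‖) {ε : ℝ} (hε : 0 ≤ ε)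
    (hcomm : ∀ j l, ‖U j * U l - U l * U j‖ ≤ ε) (j : Fin d) (v : H) :
    ∑ a : Fin d → ZMod M,
        ‖(jointLocalizer U a * (U j - (ZMod.stdAddChar (a j) : ℂ) • 1)) v‖ ^ 2 ≤
      (8 / M + 2 * M ^ d * (d * (M * ε)) ^ 2) * ‖v‖ ^ 2 := by
  have hM1 : (1 : ℝ) ≤ M := Nat.one_le_cast.2 (NeZero.pos M)
  induction d with
  | zero => exact j.elim0
  | succ d ih =>
    have hmono : 8 / M + 2 * M ^ d * (d * (M * ε)) ^ 2 ≤
        8 / M + 2 * M ^ (d + 1) * (((d + 1 : ℕ) : ℝ) * (M * ε)) ^ 2 := by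
      have h1 : (M : ℝ) ^ d ≤ M ^ (d + 1) := pow_le_pow_right₀ hM1 d.le_succ
      have h2 : (d : ℝ) ≤ ((d + 1 : ℕ) : ℝ) := Nat.cast_le.2 d.le_succ
      gcongr
    simp only [sum_fin_succ_zmod, jointLocalizer_cons]
    refine Fin.cases ?_ (fun j => ?_) j
    · set W := fun a : Fin d → ZMod M => jointLocalizer (fun j => U j.succ) a with hWdef
      have hterm : ∀ (a : Fin d → ZMod M) (b : ZMod M),
          ‖(fourierLocalizer (U 0) b * W a * (U 0 - (ZMod.stdAddChar b : ℂ) • 1)) v‖ ^ 2 ≤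
          2 * ‖(fourierLocalizer (U 0) b * (U 0 - (ZMod.stdAddChar b : ℂ) • 1)) (W a v)‖ ^ 2 +
          2 * ‖fourierLocalizer (U 0) b ((W a * U 0 - U 0 * W a) v)‖ ^ 2 := by
        intro a b
        refine le_of_eq_of_le ?_ (norm_add_sq_le_two_mul _ _)
        congr 2
        simp only [mul_apply_eq_comp, sub_apply,
          smul_apply, one_apply_eq_self, map_sub, map_smul]
        abel
      have hWX : ∀ a, ‖(W a * U 0 - U 0 * W a) v‖ ^ 2 ≤ (d * (M * ε)) ^ 2 * ‖v‖ ^ 2 := by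
        intro a
        rw [← mul_pow]
        refine pow_le_pow_left₀ (norm_nonneg _) ?_ 2
        exact ContinuousLinearMap.le_of_opNorm_le _
          (norm_jointLocalizer_commutator_le (fun j => hU j.succ) (fun j => hcomm j.succ 0) a) v
      simp only [Fin.cons_zero]
      calc _ ≤ ∑ a : Fin d → ZMod M, (2 * (4 / M * ‖W a v‖ ^ 2) +
            2 * ((d * (M * ε)) ^ 2 * ‖v‖ ^ 2)) := by
            refine Finset.sum_le_sum fun a _ =>
              (Finset.sum_le_sum fun b _ => hterm a b).trans ?_
            rw [Finset.sum_add_distrib, ← Finset.mul_sum, ← Finset.mul_sum,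
              sum_norm_sq_fourierLocalizer (hU 0)]
            have := sum_norm_sq_fourierLocalizer_mul_sub (M := M) (hU 0) (W a v)
            linarith [hWX a]
        _ = (8 / M + 2 * M ^ d * (d * (M * ε)) ^ 2) * ‖v‖ ^ 2 := by
            rw [Finset.sum_add_distrib, ← Finset.mul_sum, ← Finset.mul_sum, hWdef,
              sum_norm_sq_jointLocalizer fun j => hU j.succ]
            simp only [Finset.sum_const, Finset.card_univ, Fintype.card_pi, ZMod.card,
              Finset.prod_const, Fintype.card_fin, nsmul_eq_mul]
            push_cast
            ring
        _ ≤ _ := mul_le_mul_of_nonneg_right hmono (sq_nonneg _)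
    · simp only [Fin.cons_succ, mul_assoc (fourierLocalizer _ _),
        mul_apply_eq_comp (fourierLocalizer _ _), sum_norm_sq_fourierLocalizer (hU 0)]
      refine (ih (fun j => hU j.succ) (fun j l => hcomm j.succ l.succ) j).trans ?_
      exact mul_le_mul_of_nonneg_right hmono (sq_nonneg _)

end Localization

section WilsonDirac

variable {H : Type*} [NormedAddCommGroup H] [InnerProductSpace ℂ H] [CompleteSpace H] {d : ℕ}

namespace CliffordSystem

/-- The Wilson–Dirac symbol with scalar coefficients `s j` and scalar mass term `μ`. -/
noncomputable def symbol (cs : CliffordSystem H d) (s : Fin d → ℝ) (μ : ℝ) : H →L[ℂ] H :=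
  ∑ j, (Complex.I * s j) • cs.c j + (μ : ℂ) • cs.γ

lemma star_symbol (cs : CliffordSystem H d) (s : Fin d → ℝ) (μ : ℝ) :
    star (cs.symbol s μ) = cs.symbol s μ := by
  simp [symbol, cs.c_skew, cs.γ_sa]

lemma sum_smul_c_mul_self (cs : CliffordSystem H d) (s : Fin d → ℝ) :
    (∑ j, (Complex.I * s j) • cs.c j) * (∑ j, (Complex.I * s j) • cs.c j) =
      ((∑ j, s j ^ 2 : ℝ) : ℂ) • 1 := by
  set A := ∑ j, (Complex.I * s j) • cs.c j with hA
  have h1 : A * A = ∑ j, ∑ l, (-(s j * s l : ℂ)) • (cs.c j * cs.c l) := by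
    rw [hA, Finset.sum_mul_sum]
    refine Finset.sum_congr rfl fun j _ => Finset.sum_congr rfl fun l _ => ?_
    rw [smul_mul_smul_comm]
    congr 1
    linear_combination (s j * s l : ℂ) * Complex.I_mul_I
  have h2 : A * A = ∑ j, ∑ l, (-(s j * s l : ℂ)) • (cs.c l * cs.c j) := by
    rw [h1, Finset.sum_comm]
    simp only [mul_comm]
  have h3 : (2 : ℂ) • (A * A) = (2 : ℂ) • (((∑ j, s j ^ 2 : ℝ) : ℂ) • (1 : H →L[ℂ] H)) := by
    rw [two_smul]
    nth_rewrite 1 [h1]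
    rw [h2]
    simp only [← Finset.sum_add_distrib, ← smul_add, cs.c_rel, smul_ite, smul_zero,
      Finset.sum_ite_eq, Finset.mem_univ, if_true, smul_smul, ← Finset.sum_smul]
    congr 1
    push_cast
    rw [Finset.mul_sum]
    exact Finset.sum_congr rfl fun j _ => by ring
  exact smul_right_injective _ two_ne_zero h3

lemma symbol_mul_self (cs : CliffordSystem H d) (s : Fin d → ℝ) (μ : ℝ) :
    cs.symbol s μ * cs.symbol s μ = ((∑ j, s j ^ 2 + μ ^ 2 : ℝ) : ℂ) • 1 := by
  have hanti : cs.γ * (∑ j, (Complex.I * s j) • cs.c j) =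
      -((∑ j, (Complex.I * s j) • cs.c j) * cs.γ) := by
    rw [Finset.mul_sum, Finset.sum_mul, ← Finset.sum_neg_distrib]
    refine Finset.sum_congr rfl fun j _ => ?_
    rw [mul_smul_comm, cs.γ_anticomm, smul_mul_assoc, smul_neg]
  have hsq := cs.sum_smul_c_mul_self s
  unfold symbol
  rw [add_mul, mul_add, mul_add, hsq, smul_mul_assoc, hanti, mul_smul_comm, smul_mul_smul_comm,
    cs.γ_sq, Complex.ofReal_add, add_smul]
  push_cast
  rw [sq (μ : ℂ), smul_neg]
  abel

lemma norm_symbol_apply_sq (cs : CliffordSystem H d) (s : Fin d → ℝ) (μ : ℝ) (v : H) :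
    ‖cs.symbol s μ v‖ ^ 2 = (∑ j, s j ^ 2 + μ ^ 2) * ‖v‖ ^ 2 := by
  have h : (cs.symbol s μ).adjoint ∘SL cs.symbol s μ =
      ((∑ j, s j ^ 2 + μ ^ 2 : ℝ) : ℂ) • (1 : H →L[ℂ] H) := by
    rw [← symbol_mul_self, ← ContinuousLinearMap.star_eq_adjoint, star_symbol]
    rfl
  rw [ContinuousLinearMap.apply_norm_sq_eq_inner_adjoint_left (𝕜 := ℂ), h, smul_apply,
    one_apply_eq_self, inner_smul_left, Complex.conj_ofReal, RCLike.re_to_complex,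
    Complex.re_ofReal_mul, ← RCLike.re_to_complex, inner_self_eq_norm_sq]

lemma norm_c_apply (cs : CliffordSystem H d) (j : Fin d) (v : H) : ‖cs.c j v‖ = ‖v‖ := by
  have hsq : cs.c j * cs.c j = -1 := by
    have h := cs.c_rel j j
    rw [if_pos rfl, ← two_smul ℂ, neg_smul, ← smul_neg] at h
    exact smul_right_injective _ two_ne_zero h
  refine ContinuousLinearMap.norm_map_of_mem_unitary (𝕜 := ℂ) ?_ v
  rw [Unitary.mem_iff, cs.c_skew, neg_mul, mul_neg, hsq, neg_neg]
  exact ⟨rfl, rfl⟩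

lemma norm_γ_apply (cs : CliffordSystem H d) (v : H) : ‖cs.γ v‖ = ‖v‖ := by
  refine ContinuousLinearMap.norm_map_of_mem_unitary (𝕜 := ℂ) ?_ v
  rw [Unitary.mem_iff, cs.γ_sa, cs.γ_sq]
  exact ⟨rfl, rfl⟩

end CliffordSystem

lemma star_xPart (U : H →L[ℂ] H) : star (xPart U) = xPart U := by
  have h : star ((2 * Complex.I)⁻¹) = -(2 * Complex.I)⁻¹ := by
    simp [mul_comm]
  rw [xPart, star_smul, star_sub, star_star, h, neg_smul, ← smul_neg, neg_sub]

lemma star_yPart (U : H →L[ℂ] H) : star (yPart U) = yPart U := by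
  rw [yPart, star_smul, star_add, star_star, add_comm, star_inv₀, star_ofNat]

lemma commute_xPart {U X : H →L[ℂ] H} (h : Commute U X) (h' : Commute (star U) X) :
    Commute (xPart U) X := (h.sub_left h').smul_left _

lemma commute_yPart {U X : H →L[ℂ] H} (h : Commute U X) (h' : Commute (star U) X) :
    Commute (yPart U) X := (h.add_left h').smul_left _

lemma commute_star_of_mem_unitary {U X : H →L[ℂ] H} (hU : U ∈ unitary (H →L[ℂ] H))
    (h : Commute U X) : Commute (star U) X := by
  have h1 := Unitary.star_mul_self_of_mem hU
  have h2 := Unitary.mul_star_self_of_mem hU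
  calc star U * X = star U * X * (U * star U) := by rw [h2, mul_one]
    _ = star U * (X * U) * star U := by noncomm_ring
    _ = star U * U * X * star U := by rw [← h.eq]; noncomm_ring
    _ = X * star U := by rw [h1, one_mul]

lemma star_sub_smul_one {U : H →L[ℂ] H} (hU : U ∈ unitary (H →L[ℂ] H)) {ζ : ℂ}
    (hζ : ζ * (starRingEnd ℂ) ζ = 1) :
    star U - (starRingEnd ℂ) ζ • (1 : H →L[ℂ] H) =
      -((starRingEnd ℂ) ζ • ((U - ζ • 1) * star U)) := by
  rw [sub_mul, Unitary.mul_star_self_of_mem hU, smul_mul_assoc, one_mul, smul_sub, smul_smul,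
    mul_comm _ ζ, hζ, one_smul, neg_sub]

lemma xPart_sub_im {U : H →L[ℂ] H} (hU : U ∈ unitary (H →L[ℂ] H)) {ζ : ℂ}
    (hζ : ζ * (starRingEnd ℂ) ζ = 1) :
    xPart U - (ζ.im : ℂ) • 1 = (2 * Complex.I)⁻¹ •
      ((U - ζ • 1) + (starRingEnd ℂ) ζ • ((U - ζ • 1) * star U)) := by
  have h := star_sub_smul_one hU hζ
  rw [← neg_eq_iff_eq_neg] at h
  have him : (ζ.im : ℂ) = (2 * Complex.I)⁻¹ * (ζ - (starRingEnd ℂ) ζ) := by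
    rw [Complex.sub_conj]
    field_simp
    push_cast
    ring
  rw [← h, him, xPart, mul_smul, ← smul_sub, sub_smul]
  congr 1
  abel

lemma yPart_sub_re {U : H →L[ℂ] H} (hU : U ∈ unitary (H →L[ℂ] H)) {ζ : ℂ}
    (hζ : ζ * (starRingEnd ℂ) ζ = 1) :
    yPart U - (ζ.re : ℂ) • 1 = (2 : ℂ)⁻¹ •
      ((U - ζ • 1) + (-(starRingEnd ℂ) ζ) • ((U - ζ • 1) * star U)) := by
  have h := star_sub_smul_one hU hζ
  have hre : (ζ.re : ℂ) = (2 : ℂ)⁻¹ * (ζ + (starRingEnd ℂ) ζ) := by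
    rw [Complex.add_conj]
    push_cast
    ring
  rw [neg_smul, ← h, hre, yPart, mul_smul, ← smul_sub, add_smul]
  congr 1
  abel

lemma norm_sq_half_smul_le {E : Type*} [SeminormedAddCommGroup E] [NormedSpace ℂ E] {v w : E}
    {α ζ : ℂ} (hα : ‖α‖ = 1 / 2) (hζ : ‖ζ‖ = 1) :
    ‖α • (v + ζ • w)‖ ^ 2 ≤ (‖v‖ ^ 2 + ‖w‖ ^ 2) / 2 := by
  have h := norm_add_sq_le_two_mul v (ζ • w)
  rw [norm_smul ζ, hζ, one_mul] at h
  rw [norm_smul, mul_pow, hα]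
  linarith

lemma norm_sq_apply_xPart_sub_le (W : H →L[ℂ] H) {U : H →L[ℂ] H}
    (hU : U ∈ unitary (H →L[ℂ] H)) {ζ : ℂ} (hζ : ‖ζ‖ = 1) (v : H) :
    ‖(W * (xPart U - (ζ.im : ℂ) • 1)) v‖ ^ 2 ≤
      (‖(W * (U - ζ • 1)) v‖ ^ 2 + ‖(W * (U - ζ • 1)) (star U v)‖ ^ 2) / 2 := by
  have hζ' : ζ * (starRingEnd ℂ) ζ = 1 := by
    rw [Complex.mul_conj, Complex.normSq_eq_norm_sq, hζ]
    norm_num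
  rw [xPart_sub_im hU hζ']
  refine le_of_eq_of_le ?_ (norm_sq_half_smul_le (α := (2 * Complex.I)⁻¹)
    (ζ := (starRingEnd ℂ) ζ) (by simp) (by rw [RCLike.norm_conj, hζ]))
  simp only [mul_apply_eq_comp, smul_apply, add_apply, map_smul, map_add]

lemma norm_sq_apply_yPart_sub_le (W : H →L[ℂ] H) {U : H →L[ℂ] H}
    (hU : U ∈ unitary (H →L[ℂ] H)) {ζ : ℂ} (hζ : ‖ζ‖ = 1) (v : H) :
    ‖(W * (yPart U - (ζ.re : ℂ) • 1)) v‖ ^ 2 ≤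
      (‖(W * (U - ζ • 1)) v‖ ^ 2 + ‖(W * (U - ζ • 1)) (star U v)‖ ^ 2) / 2 := by
  have hζ' : ζ * (starRingEnd ℂ) ζ = 1 := by
    rw [Complex.mul_conj, Complex.normSq_eq_norm_sq, hζ]
    norm_num
  rw [yPart_sub_re hU hζ']
  refine le_of_eq_of_le ?_ (norm_sq_half_smul_le (α := (2 : ℂ)⁻¹)
    (ζ := -(starRingEnd ℂ) ζ) (by simp) (by rw [norm_neg, RCLike.norm_conj, hζ]))
  simp only [mul_apply_eq_comp, smul_apply, add_apply, map_smul, map_add]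

lemma star_wilsonDirac (cs : CliffordSystem H d) {U : Fin d → H →L[ℂ] H}
    (hU : ∀ j, U j ∈ unitary (H →L[ℂ] H)) (hc : ∀ j l, Commute (U j) (cs.c l))
    (hγ : ∀ j, Commute (U j) cs.γ) (κ m : ℝ) :
    star (wilsonDirac cs U κ m) = wilsonDirac cs U κ m := by
  have hx : ∀ j, star (Complex.I • (xPart (U j) * cs.c j)) =
      Complex.I • (xPart (U j) * cs.c j) := by
    intro j
    have hcomm := commute_xPart (hc j j) (commute_star_of_mem_unitary (hU j) (hc j j))
    rw [star_smul, star_mul, cs.c_skew, star_xPart, neg_mul, ← hcomm.eq]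
    simp
  have hy : Commute ((κ : ℂ) • (∑ j, (yPart (U j) - 1)) + (m : ℂ) • (1 : H →L[ℂ] H)) cs.γ := by
    refine Commute.add_left (Commute.smul_left (Commute.sum_left _ _ _ fun j _ => ?_) _)
      ((Commute.one_left _).smul_left _)
    exact (commute_yPart (hγ j) (commute_star_of_mem_unitary (hU j) (hγ j))).sub_left
      (Commute.one_left _)
  rw [wilsonDirac, star_add, star_mul, cs.γ_sa, star_smul, star_sum]
  simp only [hx]
  rw [← hy.eq]
  simp [star_yPart]

/-- The difference of the Wilson–Dirac operator and the scalar symbol at `ζ`. -/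
lemma wilsonDirac_sub_symbol (cs : CliffordSystem H d) {U : Fin d → H →L[ℂ] H}
    (hU : ∀ j, U j ∈ unitary (H →L[ℂ] H)) (hγ : ∀ j, Commute (U j) cs.γ) (m : ℝ)
    (ζ : Fin d → ℂ) :
    wilsonDirac cs U 1 m -
        cs.symbol (fun j => (ζ j).im) (∑ j, ((ζ j).re - 1) + m) =
      ∑ j, Complex.I • ((xPart (U j) - ((ζ j).im : ℂ) • 1) * cs.c j) +
        ∑ j, (yPart (U j) - ((ζ j).re : ℂ) • 1) * cs.γ := by
  have hy : ∀ j, cs.γ * yPart (U j) = yPart (U j) * cs.γ := fun j =>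
    (commute_yPart (hγ j) (commute_star_of_mem_unitary (hU j) (hγ j))).eq.symm
  simp only [wilsonDirac, CliffordSystem.symbol, Complex.ofReal_one, one_smul, mul_add,
    Finset.mul_sum, mul_sub, hy, mul_one, mul_smul_comm, sub_mul, smul_mul_assoc, one_mul,
    smul_sub, smul_smul, Complex.ofReal_add, Complex.ofReal_sum, Complex.ofReal_sub, add_smul,
    sub_smul, Finset.sum_smul, one_smul, Finset.sum_sub_distrib]
  abel

lemma norm_sum_sq_le_card_mul {E : Type*} [SeminormedAddCommGroup E] (p : Fin d → E) :
    ‖∑ j, p j‖ ^ 2 ≤ d * ∑ j, ‖p j‖ ^ 2 := by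
  refine (pow_le_pow_left₀ (norm_nonneg _) (norm_sum_le _ _) 2).trans ?_
  simpa using sq_sum_le_card_mul_sum_sq (s := Finset.univ) (f := fun j => ‖p j‖)

lemma norm_sq_le_of_eq_add {E : Type*} [SeminormedAddCommGroup E] {x y z : E} (h : z = x + y)
    {t : ℝ} (ht : 0 < t) :
    ‖x‖ ^ 2 ≤ (1 + t) * ‖z‖ ^ 2 + (1 + t⁻¹) * ‖y‖ ^ 2 := by
  have h1 : ‖x‖ ≤ ‖z‖ + ‖y‖ := by
    rw [← sub_eq_iff_eq_add.2 h]
    exact norm_sub_le _ _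
  have h2 := pow_le_pow_left₀ (norm_nonneg _) h1 2
  have h3 : 2 * ‖z‖ * ‖y‖ ≤ t * ‖z‖ ^ 2 + t⁻¹ * ‖y‖ ^ 2 := by
    have h4 : 0 ≤ t⁻¹ * (t * ‖z‖ - ‖y‖) ^ 2 := by positivity
    have h5 : t⁻¹ * (t * ‖z‖ - ‖y‖) ^ 2 =
        t * ‖z‖ ^ 2 + t⁻¹ * ‖y‖ ^ 2 - 2 * ‖z‖ * ‖y‖ := by
      field_simp
      ring
    linarith
  nlinarith

variable {M : ℕ} [NeZero M]

lemma stdAddChar_im (a : ZMod M) :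
    (ZMod.stdAddChar a : ℂ).im = Real.sin (2 * Real.pi * (a.val / M)) := by
  have h : (2 * Real.pi * Complex.I * a.val / M : ℂ) =
      ((2 * Real.pi * (a.val / M) : ℝ) : ℂ) * Complex.I := by
    push_cast
    ring
  rw [ZMod.stdAddChar_apply, ZMod.toCircle_apply, h, Complex.exp_ofReal_mul_I_im]

lemma stdAddChar_re (a : ZMod M) :
    (ZMod.stdAddChar a : ℂ).re = Real.cos (2 * Real.pi * (a.val / M)) := by
  have h : (2 * Real.pi * Complex.I * a.val / M : ℂ) =
      ((2 * Real.pi * (a.val / M) : ℝ) : ℂ) * Complex.I := by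
    push_cast
    ring
  rw [ZMod.stdAddChar_apply, ZMod.toCircle_apply, h, Complex.exp_ofReal_mul_I_re]

lemma sum_norm_sq_jointLocalizer_remainder (cs : CliffordSystem H d) {U : Fin d → H →L[ℂ] H}
    (hU : ∀ j, U j ∈ unitary (H →L[ℂ] H)) (hγ : ∀ j, Commute (U j) cs.γ) (m : ℝ) {E : ℝ}
    (hE : ∀ j v, ∑ a : Fin d → ZMod M,
      ‖(jointLocalizer U a * (U j - (ZMod.stdAddChar (a j) : ℂ) • 1)) v‖ ^ 2 ≤ E * ‖v‖ ^ 2)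
    (v : H) :
    ∑ a : Fin d → ZMod M, ‖(jointLocalizer U a * (wilsonDirac cs U 1 m -
      cs.symbol (fun j => (ZMod.stdAddChar (a j) : ℂ).im)
        (∑ j, ((ZMod.stdAddChar (a j) : ℂ).re - 1) + m))) v‖ ^ 2 ≤ 4 * d ^ 2 * E * ‖v‖ ^ 2 := by
  have hstar : ∀ j w, ‖star (U j) w‖ = ‖w‖ := fun j w =>
    ContinuousLinearMap.norm_map_of_mem_unitary (Unitary.star_mem (hU j)) w
  have hpair : ∀ j w, ∑ a : Fin d → ZMod M,
      (‖(jointLocalizer U a * (U j - (ZMod.stdAddChar (a j) : ℂ) • 1)) w‖ ^ 2 +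
        ‖(jointLocalizer U a * (U j - (ZMod.stdAddChar (a j) : ℂ) • 1)) (star (U j) w)‖ ^ 2) / 2 ≤
      E * ‖w‖ ^ 2 := by
    intro j w
    rw [← Finset.sum_div, Finset.sum_add_distrib]
    have h1 := hE j w
    have h2 := hE j (star (U j) w)
    rw [hstar] at h2
    linarith
  have hx : ∀ j, ∑ a : Fin d → ZMod M, ‖(jointLocalizer U a *
      (xPart (U j) - ((ZMod.stdAddChar (a j) : ℂ).im : ℂ) • 1)) (cs.c j v)‖ ^ 2 ≤
        E * ‖v‖ ^ 2 := by
    intro j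
    rw [← cs.norm_c_apply j v]
    exact (Finset.sum_le_sum fun a _ => norm_sq_apply_xPart_sub_le _ (hU j)
      (norm_stdAddChar _) _).trans (hpair j _)
  have hy : ∀ j, ∑ a : Fin d → ZMod M, ‖(jointLocalizer U a *
      (yPart (U j) - ((ZMod.stdAddChar (a j) : ℂ).re : ℂ) • 1)) (cs.γ v)‖ ^ 2 ≤
        E * ‖v‖ ^ 2 := by
    intro j
    rw [← cs.norm_γ_apply v]
    exact (Finset.sum_le_sum fun a _ => norm_sq_apply_yPart_sub_le _ (hU j)
      (norm_stdAddChar _) _).trans (hpair j _)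
  have hterm : ∀ a : Fin d → ZMod M, ‖(jointLocalizer U a * (wilsonDirac cs U 1 m -
      cs.symbol (fun j => (ZMod.stdAddChar (a j) : ℂ).im)
        (∑ j, ((ZMod.stdAddChar (a j) : ℂ).re - 1) + m))) v‖ ^ 2 ≤
      2 * d * (∑ j, ‖(jointLocalizer U a *
          (xPart (U j) - ((ZMod.stdAddChar (a j) : ℂ).im : ℂ) • 1)) (cs.c j v)‖ ^ 2 +
        ∑ j, ‖(jointLocalizer U a *
          (yPart (U j) - ((ZMod.stdAddChar (a j) : ℂ).re : ℂ) • 1)) (cs.γ v)‖ ^ 2) := by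
    intro a
    have hsplit : (jointLocalizer U a * (wilsonDirac cs U 1 m -
        cs.symbol (fun j => (ZMod.stdAddChar (a j) : ℂ).im)
          (∑ j, ((ZMod.stdAddChar (a j) : ℂ).re - 1) + m))) v =
        ∑ j, Complex.I • (jointLocalizer U a *
          (xPart (U j) - ((ZMod.stdAddChar (a j) : ℂ).im : ℂ) • 1)) (cs.c j v) +
        ∑ j, (jointLocalizer U a *
          (yPart (U j) - ((ZMod.stdAddChar (a j) : ℂ).re : ℂ) • 1)) (cs.γ v) := by
      rw [wilsonDirac_sub_symbol cs hU hγ m fun j => (ZMod.stdAddChar (a j) : ℂ)]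
      simp only [mul_apply_eq_comp, add_apply, sum_apply, smul_apply, map_add, map_sum, map_smul]
    have h1 := norm_sum_sq_le_card_mul fun j => Complex.I • (jointLocalizer U a *
          (xPart (U j) - ((ZMod.stdAddChar (a j) : ℂ).im : ℂ) • 1)) (cs.c j v)
    have h2 := norm_sum_sq_le_card_mul fun j => (jointLocalizer U a *
          (yPart (U j) - ((ZMod.stdAddChar (a j) : ℂ).re : ℂ) • 1)) (cs.γ v)
    simp only [norm_smul, Complex.norm_I, one_mul] at h1
    rw [hsplit]
    refine (norm_add_sq_le_two_mul _ _).trans ?_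
    linarith
  refine (Finset.sum_le_sum fun a _ => hterm a).trans ?_
  rw [← Finset.mul_sum, Finset.sum_add_distrib, Finset.sum_comm,
    Finset.sum_comm (γ := Fin d → ZMod M)]
  have h1 := Finset.sum_le_sum fun j (_ : j ∈ Finset.univ) => hx j
  have h2 := Finset.sum_le_sum fun j (_ : j ∈ Finset.univ) => hy j
  rw [Finset.sum_const, Finset.card_univ, Fintype.card_fin, nsmul_eq_mul] at h1 h2
  calc _ ≤ 2 * (d : ℝ) * (d * (E * ‖v‖ ^ 2) + d * (E * ‖v‖ ^ 2)) := by gcongr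
    _ = _ := by ring

lemma sInf_fmSq_mul_norm_sq_le (cs : CliffordSystem H d) {U : Fin d → H →L[ℂ] H}
    (hU : ∀ j, U j ∈ unitary (H →L[ℂ] H)) (hc : ∀ j l, Commute (U j) (cs.c l))
    (hγ : ∀ j, Commute (U j) cs.γ) (m : ℝ) {E : ℝ}
    (hE : ∀ j v, ∑ a : Fin d → ZMod M,
      ‖(jointLocalizer U a * (U j - (ZMod.stdAddChar (a j) : ℂ) • 1)) v‖ ^ 2 ≤ E * ‖v‖ ^ 2)
    {t : ℝ} (ht : 0 < t) (v : H) :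
    sInf (Set.range (fmSq d m)) * ‖v‖ ^ 2 ≤
      (1 + t) * ‖wilsonDirac cs U 1 m v‖ ^ 2 + (1 + t⁻¹) * (4 * d ^ 2 * E * ‖v‖ ^ 2) := by
  have hUn : ∀ j w, ‖U j w‖ = ‖w‖ := fun j w =>
    ContinuousLinearMap.norm_map_of_mem_unitary (hU j) w
  set S := fun a : Fin d → ZMod M => cs.symbol (fun j => (ZMod.stdAddChar (a j) : ℂ).im)
        (∑ j, ((ZMod.stdAddChar (a j) : ℂ).re - 1) + m) with hS
  have hrem := sum_norm_sq_jointLocalizer_remainder cs hU hγ m hE v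
  have hcommS : ∀ a, Commute (jointLocalizer U a) (S a) := fun a =>
    Commute.add_right (Commute.sum_right _ _ _ fun j _ =>
        (commute_jointLocalizer (fun i => hc i j) a).smul_right _)
      ((commute_jointLocalizer hγ a).smul_right _)
  have hterm : ∀ a : Fin d → ZMod M,
      sInf (Set.range (fmSq d m)) * ‖jointLocalizer U a v‖ ^ 2 ≤
        (1 + t) * ‖jointLocalizer U a (wilsonDirac cs U 1 m v)‖ ^ 2 +
          (1 + t⁻¹) * ‖(jointLocalizer U a * (wilsonDirac cs U 1 m - S a)) v‖ ^ 2 := by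
    intro a
    have hsym : ‖S a (jointLocalizer U a v)‖ ^ 2 =
        fmSq d m (fun j => (a j).val / M) * ‖jointLocalizer U a v‖ ^ 2 := by
      rw [hS, cs.norm_symbol_apply_sq]
      simp only [fmSq, stdAddChar_im, stdAddChar_re]
    have hdecomp : jointLocalizer U a (wilsonDirac cs U 1 m v) =
        S a (jointLocalizer U a v) +
          (jointLocalizer U a * (wilsonDirac cs U 1 m - S a)) v := by
      rw [← mul_apply_eq_comp (S a), ← (hcommS a).eq]
      simp
    refine le_trans ?_ (norm_sq_le_of_eq_add hdecomp ht)
    rw [hsym]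
    exact mul_le_mul_of_nonneg_right (sInf_fmSq_le d m _) (sq_nonneg _)
  have hsum := Finset.sum_le_sum fun a (_ : a ∈ Finset.univ) => hterm a
  rw [Finset.sum_add_distrib, ← Finset.mul_sum, ← Finset.mul_sum, ← Finset.mul_sum,
    sum_norm_sq_jointLocalizer hUn, sum_norm_sq_jointLocalizer hUn] at hsum
  have ht' : 0 ≤ 1 + t⁻¹ := by positivity
  exact hsum.trans (add_le_add le_rfl (mul_le_mul_of_nonneg_left hrem ht'))

end WilsonDirac

lemma exists_localization_parameters (d : ℕ) {η : ℝ} (hη : 0 < η) :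
    ∃ M : ℕ, 0 < M ∧ ∃ ε : ℝ, 0 < ε ∧
      8 / (M : ℝ) + 2 * (M : ℝ) ^ d * (d * (M * ε)) ^ 2 ≤ η := by
  obtain ⟨M, hM⟩ := exists_nat_gt (16 / η)
  have hM0 : (0 : ℝ) < M := lt_trans (by positivity) hM
  refine ⟨M, Nat.cast_pos.1 hM0, ?_⟩
  set K : ℝ := 2 * (M : ℝ) ^ d * (d * M) ^ 2 with hK
  have hK0 : 0 ≤ K := by positivity
  refine ⟨√(η / (2 * (K + 1))), by positivity, ?_⟩
  have h1 : 8 / (M : ℝ) ≤ η / 2 := by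
    rw [div_lt_iff₀ hη] at hM
    rw [div_le_iff₀ hM0]
    linarith
  have h2 : 2 * (M : ℝ) ^ d * (d * (M * √(η / (2 * (K + 1))))) ^ 2 =
      K * (η / (2 * (K + 1))) := by
    rw [← mul_assoc, mul_pow _ (√_), Real.sq_sqrt (by positivity), hK]
    ring
  have h3 : K * (η / (2 * (K + 1))) ≤ η / 2 := by
    rw [mul_div_assoc', div_le_div_iff₀ (by positivity) two_pos]
    nlinarith
  linarith

/-- bottom of the spectrum of the universal massive Wilson--Dirac squared is
positive, and quasi-representations with small enough commutators have `D(1,m)² ≥ C`. -/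
theorem statement0 (d : ℕ) (hd : 1 ≤ d) (m : ℝ) (hm0 : 0 < m) (hm2 : m < 2) :
    0 < sInf (Set.range (fmSq d m)) ∧
    ∀ C : ℝ, 0 < C → C < sInf (Set.range (fmSq d m)) →
      ∃ ε > (0 : ℝ), ∀ (H : Type) [NormedAddCommGroup H] [InnerProductSpace ℂ H]
        [FiniteDimensional ℂ H],
        ∀ (cs : CliffordSystem H d) (U : Fin d → H →L[ℂ] H),
          (∀ j, U j ∈ unitary (H →L[ℂ] H)) →
          (∀ j l, Commute (U j) (cs.c l)) →
          (∀ j, Commute (U j) cs.γ) →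
          (∀ j l, ‖U j * U l - U l * U j‖ < ε) →
          (wilsonDirac cs U 1 m ^ 2 - ((C : ℝ) : ℂ) • (1 : H →L[ℂ] H)).IsPositive ∧
            IsUnit (wilsonDirac cs U 1 m) := by

  refine ⟨sInf_fmSq_pos d hm0 hm2, fun C hC hCl => ?_⟩
  set lam := sInf (Set.range (fmSq d m))
  have hd' : (0 : ℝ) < d := Nat.cast_pos.2 hd
  have hgap : 0 < lam - C := sub_pos.2 hCl
  set t : ℝ := (lam - C) / (2 * C) with ht
  have ht0 : 0 < t := by positivity
  have hden : 0 < (1 + t⁻¹) * (4 * (d : ℝ) ^ 2) := by positivity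
  obtain ⟨M, hM, ε, hε, hbound⟩ := exists_localization_parameters d
    (η := (lam - C) / 2 / ((1 + t⁻¹) * (4 * (d : ℝ) ^ 2))) (by positivity)
  refine ⟨ε, hε, fun H _ _ _ cs U hU hc hγ hcomm => ?_⟩
  have : NeZero M := ⟨hM.ne'⟩
  have hlower : ∀ v, C * ‖v‖ ^ 2 ≤ ‖wilsonDirac cs U 1 m v‖ ^ 2 := by
    intro v
    have h := sInf_fmSq_mul_norm_sq_le (M := M) cs hU hc hγ m
      (sum_norm_sq_jointLocalizer_mul_sub
        (fun j w => ContinuousLinearMap.norm_map_of_mem_unitary (hU j) w) hε.le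
        fun j l => (hcomm j l).le) ht0 v
    rw [le_div_iff₀ hden] at hbound
    have h2 := mul_le_mul_of_nonneg_right hbound (sq_nonneg ‖v‖)
    have h3 : (1 + t) * C = (lam + C) / 2 := by
      rw [ht]
      field_simp
      ring
    have h4 : (1 + t) * (C * ‖v‖ ^ 2) ≤ (1 + t) * ‖wilsonDirac cs U 1 m v‖ ^ 2 := by
      rw [← mul_assoc, h3]
      linarith
    exact le_of_mul_le_mul_left h4 (by positivity)
  have hsa := star_wilsonDirac cs hU hc hγ 1 m
  constructor
  · rw [ContinuousLinearMap.isPositive_def']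
    constructor
    · rw [IsSelfAdjoint, star_sub, star_pow, hsa, star_smul, star_one]
      simp
    · intro v
      have hadj := ContinuousLinearMap.apply_norm_sq_eq_inner_adjoint_left (𝕜 := ℂ)
        (wilsonDirac cs U 1 m) v
      rw [← ContinuousLinearMap.star_eq_adjoint, hsa] at hadj
      have hself : RCLike.re (inner ℂ (((C : ℝ) : ℂ) • v) v) = C * ‖v‖ ^ 2 := by
        rw [inner_smul_left, Complex.conj_ofReal, RCLike.re_to_complex,
          Complex.re_ofReal_mul, ← RCLike.re_to_complex, inner_self_eq_norm_sq]
      rw [ContinuousLinearMap.reApplyInnerSelf_apply, sub_apply, inner_sub_left, map_sub, sq,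
        smul_apply, one_apply_eq_self, hself, sub_nonneg]
      exact (hlower v).trans_eq hadj
  · rw [ContinuousLinearMap.isUnit_iff_bijective]
    have hinj : Function.Injective (wilsonDirac cs U 1 m) := by
      rw [injective_iff_map_eq_zero]
      intro v hv
      have h := hlower v
      rw [hv, norm_zero, zero_pow two_ne_zero] at h
      have h0 : ‖v‖ ^ 2 ≤ 0 := by
        by_contra! hpos
        exact (mul_pos hC hpos).not_ge h
      exact norm_eq_zero.1 (pow_eq_zero_iff two_ne_zero |>.1 (le_antisymm h0 (sq_nonneg _)))
    exact ⟨hinj, LinearMap.injective_iff_surjective (f := (wilsonDirac cs U 1 m).toLinearMap)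
      |>.1 hinj⟩
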